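/- Let U, U' ⊆ ℂ be open and let g : U → U' be holomorphic with nowhere-vanishing derivative g'. Let h, v : U' → ℂ be smooth, and define on U the transformed quantities h̃ = (h∘g)·(g')² + S(g) and ṽ = (v∘g)/g', where S(g) = g'''/g' − (3/2)·(g''/g')² is the Schwarzian derivative of the holomorphic map g. Then D_{h̃} ṽ = ((D_h v)∘g)·(g')² on U; i.e., the operator D_h maps vector-field coefficients to quadratic-differential coefficients compatibly with holomorphic coordinate changes, provided h transforms as a projective connection. -/

import Mathlib

/-!
Write `p, q, r, s` for the first four derivatives of `g` and `Vₖ = (∂ᵏ v) ∘ g`. The Wirtinger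
derivative is a derivation which agrees with `deriv` on holomorphic functions and satisfies the
chain rule `∂(u ∘ g) = ((∂u) ∘ g) · p`, because `∂̄g = 0`. Hence `∂ⁿ (V₀ / p)`, for `n ≤ 3`, and
`∂h̃` are explicit expressions in `Vₖ`, `h ∘ g`, `(∂h) ∘ g` and `p, q, r, s`, rational in the
latter. In `D_{h̃} ṽ` the `V₂` terms of `∂³ṽ` cancel by themselves, while its `V₁` and `V₀` terms
cancel against `2 S(g) ∂ṽ + ∂S(g) ṽ`; what remains is `((D_h v) ∘ g) p²`.

The derivation rules are stated for `HasWD`, which records differentiability along with the value,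
so that no junk value of `fderiv` enters.
-/

open Complex MeasureTheory

/-- The Wirtinger derivative ∂u = (u_x − i·u_y)/2 of a function `u : ℂ → ℂ`. -/
noncomputable def wd (u : ℂ → ℂ) : ℂ → ℂ :=
  fun z => (fderiv ℝ u z 1 - Complex.I * fderiv ℝ u z Complex.I) / 2

/-- The conjugate Wirtinger derivative ∂̄u = (u_x + i·u_y)/2. -/
noncomputable def wdbar (u : ℂ → ℂ) : ℂ → ℂ :=
  fun z => (fderiv ℝ u z 1 + Complex.I * fderiv ℝ u z Complex.I) / 2

/-- The Schwarzian derivative {f,z} = ∂³f/∂f − (3/2)·(∂²f/∂f)² of a smooth map. -/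
noncomputable def schwarz (f : ℂ → ℂ) : ℂ → ℂ :=
  fun z => wd (wd (wd f)) z / wd f z - (3/2) * (wd (wd f) z / wd f z)^2

/-- The Schwarzian derivative S(g) = g'''/g' − (3/2)·(g''/g')² of a holomorphic map. -/
noncomputable def schwarzD (g : ℂ → ℂ) : ℂ → ℂ :=
  fun z => deriv (deriv (deriv g)) z / deriv g z - (3/2) * (deriv (deriv g) z / deriv g z)^2

/-- The operator ∂̄_μ^{(k)} u = ∂̄u − μ·∂u − k·(∂μ)·u. -/
noncomputable def dbarMu (μ : ℂ → ℂ) (k : ℤ) (u : ℂ → ℂ) : ℂ → ℂ :=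
  fun z => wdbar u z - μ z * wd u z - (k : ℂ) * wd μ z * u z

/-- The third-order operator D_h u = ∂³u + 2h·∂u + (∂h)·u. -/
noncomputable def Dop (h u : ℂ → ℂ) : ℂ → ℂ :=
  fun z => wd (wd (wd u)) z + 2 * h z * wd u z + wd h z * u z

/-- The Lie derivative on weight-2 quantities: L_v q = v·∂q + 2·(∂v)·q. -/
noncomputable def lieD (v q : ℂ → ℂ) : ℂ → ℂ :=
  fun z => v z * wd q z + 2 * wd v z * q z

/-- `u` is real differentiable at `z` with Wirtinger derivative `∂u(z) = a`. -/
def HasWD (u : ℂ → ℂ) (a z : ℂ) : Prop :=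
  DifferentiableAt ℝ u z ∧ wd u z = a

lemma HasWD.add {u w : ℂ → ℂ} {a b z : ℂ} (hu : HasWD u a z) (hw : HasWD w b z) :
    HasWD (fun x => u x + w x) (a + b) z := by
  obtain ⟨du, rfl⟩ := hu
  obtain ⟨dw, rfl⟩ := hw
  refine ⟨du.add dw, ?_⟩
  have e := (du.hasFDerivAt.add dw.hasFDerivAt).fderiv
  change fderiv ℝ (fun x => u x + w x) z = _ at e
  simp only [wd, e, add_apply]
  ring

lemma HasWD.mul {u w : ℂ → ℂ} {a b z : ℂ} (hu : HasWD u a z) (hw : HasWD w b z) :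
    HasWD (fun x => u x * w x) (a * w z + u z * b) z := by
  obtain ⟨du, rfl⟩ := hu
  obtain ⟨dw, rfl⟩ := hw
  refine ⟨du.mul dw, ?_⟩
  have e := (du.hasFDerivAt.mul dw.hasFDerivAt).fderiv
  change fderiv ℝ (fun x => u x * w x) z = _ at e
  simp only [wd, e, add_apply, smul_apply, smul_eq_mul]
  ring

lemma HasWD.of_hasDerivAt {f : ℂ → ℂ} {a z : ℂ} (hf : HasDerivAt f a z) : HasWD f a z := by
  have hd := hf.hasFDerivAt.restrictScalars ℝ
  refine ⟨hd.differentiableAt, ?_⟩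
  simp only [wd, hd.fderiv, ContinuousLinearMap.coe_restrictScalars',
    ContinuousLinearMap.toSpanSingleton_apply, smul_eq_mul]
  linear_combination (-a / 2) * Complex.I_mul_I

/-- Chain rule for a holomorphic inner function: no `∂̄u` term appears since `∂̄g = 0`. -/
lemma HasWD.comp {u g : ℂ → ℂ} {a p z : ℂ} (hu : HasWD u a (g z)) (hg : HasDerivAt g p z) :
    HasWD (fun x => u (g x)) (a * p) z := by
  obtain ⟨du, rfl⟩ := hu
  have hd := hg.hasFDerivAt.restrictScalars ℝ
  have hc := du.hasFDerivAt.comp z hd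
  refine ⟨hc.differentiableAt, ?_⟩
  have e := hc.fderiv
  change fderiv ℝ (fun x => u (g x)) z = _ at e
  simp only [wd, e, ContinuousLinearMap.coe_comp, Function.comp_apply,
    ContinuousLinearMap.coe_restrictScalars', ContinuousLinearMap.toSpanSingleton_apply,
    smul_eq_mul, one_mul]
  -- A real-linear map on `ℂ` is determined by its values at `1` and `I`.
  have key : ∀ w : ℂ, fderiv ℝ u (g z) w
      = w.re * fderiv ℝ u (g z) 1 + w.im * fderiv ℝ u (g z) Complex.I := by
    intro w
    have hw : w = w.re • (1 : ℂ) + w.im • Complex.I := by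
      simp
    conv_lhs => rw [hw, map_add, map_smul, map_smul]
    simp
  rw [key p, key (Complex.I * p)]
  have hp : p = p.re + p.im * Complex.I := (Complex.re_add_im p).symm
  have h1 : (Complex.I * p).re = -p.im := by simp
  have h2 : (Complex.I * p).im = p.re := by simp
  rw [h1, h2]
  generalize fderiv ℝ u (g z) 1 = A
  generalize fderiv ℝ u (g z) Complex.I = B
  push_cast
  linear_combination
    (p.im * B / 2) * Complex.I_mul_I - (A - Complex.I * B) / 2 * hp

lemma HasWD.congr_val {u : ℂ → ℂ} {a b z : ℂ} (hu : HasWD u a z) (hab : a = b) :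
    HasWD u b z := hab ▸ hu

lemma HasWD.congr_on {u w : ℂ → ℂ} {a z : ℂ} {U : Set ℂ} (hu : HasWD u a z) (hU : IsOpen U)
    (hz : z ∈ U) (huw : ∀ x ∈ U, w x = u x) : HasWD w a z := by
  have he : w =ᶠ[nhds z] u := Filter.eventuallyEq_of_mem (hU.mem_nhds hz) huw
  refine ⟨hu.1.congr_of_eventuallyEq he, ?_⟩
  rw [← hu.2]
  simp only [wd, he.fderiv_eq]

lemma contDiffOn_wd {u : ℂ → ℂ} {U : Set ℂ} (hU : IsOpen U)
    (hu : ContDiffOn ℝ (⊤ : ℕ∞) u U) : ContDiffOn ℝ (⊤ : ℕ∞) (wd u) U := by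
  have hf : ContDiffOn ℝ (⊤ : ℕ∞) (fderiv ℝ u) U := hu.fderiv_of_isOpen hU (by simp)
  have h1 := hf.clm_apply (contDiffOn_const (c := (1 : ℂ)))
  have h2 := hf.clm_apply (contDiffOn_const (c := Complex.I))
  exact (h1.sub (contDiffOn_const.mul h2)).div_const 2

lemma hasWD_of_contDiffOn {u : ℂ → ℂ} {U : Set ℂ} {z : ℂ} (hU : IsOpen U)
    (hu : ContDiffOn ℝ (⊤ : ℕ∞) u U) (hz : z ∈ U) : HasWD u (wd u z) z :=
  ⟨(hu.contDiffAt (hU.mem_nhds hz)).differentiableAt (by simp), rfl⟩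

/-- `D_h` maps vector-field coefficients to quadratic-differential
coefficients compatibly with holomorphic coordinate changes, provided `h`
transforms as a projective connection: `D_{h̃} ṽ = ((D_h v)∘g)·(g')²`. -/
theorem stmt7 (U U' : Set ℂ) (hU : IsOpen U) (hU' : IsOpen U')
    (g : ℂ → ℂ) (hg : DifferentiableOn ℂ g U) (hmaps : Set.MapsTo g U U')
    (hg' : ∀ z ∈ U, deriv g z ≠ 0)
    (h v : ℂ → ℂ) (hh : ContDiffOn ℝ (⊤ : ℕ∞) h U') (hv : ContDiffOn ℝ (⊤ : ℕ∞) v U') :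
    ∀ z ∈ U,
      Dop (fun x => h (g x) * (deriv g x)^2 + schwarzD g x)
          (fun x => v (g x) / deriv g x) z
        = Dop h v (g z) * (deriv g z)^2 := by
  intro z hz
  have hp := hg.deriv hU
  have hq := hp.deriv hU
  have hr := hq.deriv hU
  have dg : ∀ x ∈ U, HasDerivAt g (deriv g x) x := fun x hx =>
    (hg.differentiableAt (hU.mem_nhds hx)).hasDerivAt
  have dp : ∀ x ∈ U, HasDerivAt (deriv g) (deriv (deriv g) x) x := fun x hx =>
    (hp.differentiableAt (hU.mem_nhds hx)).hasDerivAt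
  have dq : ∀ x ∈ U, HasDerivAt (deriv (deriv g)) (deriv (deriv (deriv g)) x) x := fun x hx =>
    (hq.differentiableAt (hU.mem_nhds hx)).hasDerivAt
  have dr : ∀ x ∈ U, HasDerivAt (deriv (deriv (deriv g))) (deriv (deriv (deriv (deriv g))) x) x :=
    fun x hx => (hr.differentiableAt (hU.mem_nhds hx)).hasDerivAt
  have hv1 := contDiffOn_wd hU' hv
  have hv2 := contDiffOn_wd hU' hv1
  have pull : ∀ {u : ℂ → ℂ}, ContDiffOn ℝ (⊤ : ℕ∞) u U' → ∀ x ∈ U,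
      HasWD (fun y => u (g y)) (wd u (g x) * deriv g x) x := fun hu x hx =>
    (hasWD_of_contDiffOn hU' hu (hmaps hx)).comp (dg x hx)
  set p := deriv g with p_def
  set q := deriv p with q_def
  set r := deriv q with r_def
  set s := deriv r with s_def
  have w1 : ∀ x ∈ U, HasWD (fun x => v (g x) / p x)
      (wd v (g x) + v (g x) * (-q x / p x ^ 2)) x := by
    intro x hx
    have hpx := hg' x hx
    have c := HasWD.of_hasDerivAt ((dp x hx).fun_inv hpx)
    refine (((pull hv x hx).mul c).congr_val ?_).congr_on hU hx
      (fun y _ => div_eq_mul_inv _ _)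
    field_simp
  have w2 : ∀ x ∈ U, HasWD (wd (fun x => v (g x) / p x))
      (wd (wd v) (g x) * p x + wd v (g x) * (-q x / p x)
        + v (g x) * (-r x / p x ^ 2 + 2 * q x ^ 2 / p x ^ 3)) x := by
    intro x hx
    have hpx := hg' x hx
    have c := HasWD.of_hasDerivAt
      ((dq x hx).fun_neg.fun_div ((dp x hx).fun_pow 2) (pow_ne_zero 2 hpx))
    refine (((pull hv1 x hx).add ((pull hv x hx).mul c)).congr_val ?_).congr_on hU hx
      (fun y hy => (w1 y hy).2)
    field_simp
    ring
  have w3 : ∀ x ∈ U, HasWD (wd (wd (fun x => v (g x) / p x)))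
      (wd (wd (wd v)) (g x) * p x ^ 2
        + wd v (g x) * (-2 * r x / p x + 3 * q x ^ 2 / p x ^ 2)
        + v (g x) * (-s x / p x ^ 2 + 6 * q x * r x / p x ^ 3 - 6 * q x ^ 3 / p x ^ 4)) x := by
    intro x hx
    have hpx := hg' x hx
    have c1 := HasWD.of_hasDerivAt ((dq x hx).fun_neg.fun_div (dp x hx) hpx)
    have c0 := HasWD.of_hasDerivAt
      (((dr x hx).fun_neg.fun_div ((dp x hx).fun_pow 2) (pow_ne_zero 2 hpx)).fun_add
        ((((dq x hx).fun_pow 2).const_mul 2).fun_div ((dp x hx).fun_pow 3) (pow_ne_zero 3 hpx)))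
    refine (((((pull hv2 x hx).mul (HasWD.of_hasDerivAt (dp x hx))).add
      ((pull hv1 x hx).mul c1)).add ((pull hv x hx).mul c0)).congr_val ?_).congr_on hU hx
      (fun y hy => (w2 y hy).2)
    field_simp
    ring
  have wh : HasWD (fun x => h (g x) * (p x) ^ 2 + schwarzD g x)
      (wd h (g z) * p z ^ 3 + 2 * h (g z) * p z * q z
        + (s z / p z - 4 * r z * q z / p z ^ 2 + 3 * q z ^ 3 / p z ^ 3)) z := by
    have hpz := hg' z hz
    have c := HasWD.of_hasDerivAt (((dr z hz).fun_div (dp z hz) hpz).fun_sub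
      ((((dq z hz).fun_div (dp z hz) hpz).fun_pow 2).const_mul (3 / 2)))
    refine ((((pull hh z hz).mul (HasWD.of_hasDerivAt ((dp z hz).fun_pow 2))).add
      c).congr_val ?_).congr_on hU hz (fun y _ => rfl)
    norm_num only [Nat.cast_ofNat, pow_one]
    field_simp
    ring
  have hpz := hg' z hz
  have hS : schwarzD g z = r z / p z - (3 / 2) * (q z / p z) ^ 2 := rfl
  simp only [Dop, (w1 z hz).2, (w3 z hz).2, wh.2, hS]
  field_simp
  ring
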